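/- For every NPLTS (S, A, →) and all states s1, s2 ∈ S, the following chain of inclusions holds among the equivalences based on extremal probabilities: s1 ≈_{PFTr,⊔⊓} s2 implies s1 ≈_{PF,⊔⊓} s2, which implies s1 ≈_{PCTr,⊔⊓} s2, which implies s1 ≈_{PTr,⊔⊓} s2. -/

import Mathlib

open scoped ENNReal
open Classical

noncomputable section

/-- Infimum of a set of values in `ℝ≥0∞`, taken to be `0` when the set is empty
(matching the paper's convention for `⊓` over an empty set). -/
def inf0 (X : Set ℝ≥0∞) : ℝ≥0∞ := if X = ∅ then 0 else sInf X

/-- Probability mass that a discrete distribution assigns to a set of states. -/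
def pmfMass {S : Type} (D : PMF S) (G : Set S) : ℝ≥0∞ := ∑' x : G, D x

/-- A nondeterministic and probabilistic labeled transition system (NPLTS):
a transition relation `→ ⊆ S × A × Distr(S)`, with `Distr(S)` the discrete
probability distributions over `S` (formalized as `PMF S`). -/
structure NPLTS (S A : Type) where
  trans : S → A → PMF S → Prop

namespace NPLTS

variable {S A : Type}

/-- The set of actions enabled at a state. -/
def enabled (L : NPLTS S A) (s : S) : Set A := {a | ∃ D, L.trans s a D}

/-- `s` has at least one outgoing transition. -/
def hasTrans (L : NPLTS S A) (s : S) : Prop := ∃ a D, L.trans s a D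

/-- A finite computation from `s`, recorded as the list of its steps
(action, target state): each step must come from some transition whose
distribution gives the target state positive probability. -/
def IsComp (L : NPLTS S A) : S → List (A × S) → Prop
  | _, [] => True
  | s, (a, s') :: c => (∃ D, L.trans s a D ∧ s' ∈ D.support) ∧ L.IsComp s' c

/-- The probability of a computation: the product of the step probabilities.
(In a fully probabilistic NPLTS, such as a resolution, the chosen transition
at each state is unique, so the supremum below selects its probability.) -/
def compProb (L : NPLTS S A) : S → List (A × S) → ℝ≥0∞
  | _, [] => 1
  | s, (a, s') :: c => (⨆ (D : PMF S) (_ : L.trans s a D), D s') * L.compProb s' c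

/-- The probability of a set of computations from `s`. -/
def probSet (L : NPLTS S A) (s : S) (C : Set (List (A × S))) : ℝ≥0∞ :=
  ∑' c : C, L.compProb s (c : List (A × S))

/-- Each state has finitely many outgoing transitions. -/
def FinitelyBranching (L : NPLTS S A) : Prop :=
  ∀ s : S, {p : A × PMF S | L.trans s p.1 p.2}.Finite

/-- Every transition concentrates all the probability mass in a single state. -/
def FullyNondeterministic (L : NPLTS S A) : Prop :=
  ∀ s a D, L.trans s a D → ∃ s', D = PMF.pure s'

/-- Every state has at most one outgoing transition. -/
def FullyProbabilistic (L : NPLTS S A) : Prop :=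
  ∀ (s : S) a₁ D₁ a₂ D₂, L.trans s a₁ D₁ → L.trans s a₂ D₂ → a₁ = a₂ ∧ D₁ = D₂

/-- Fully synchronous parallel composition of two NPLTSs over the same actions. -/
def par {S₁ S₂ : Type} (L₁ : NPLTS S₁ A) (L₂ : NPLTS S₂ A) : NPLTS (S₁ × S₂) A where
  trans p a D := ∃ D₁ D₂, L₁.trans p.1 a D₁ ∧ L₂.trans p.2 a D₂ ∧
    ∀ q : S₁ × S₂, D q = D₁ q.1 * D₂ q.2

end NPLTS

/-- The final state of a computation starting at `s`. -/
def lastState {S A : Type} : S → List (A × S) → S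
  | s, [] => s
  | _, (_, s') :: c => lastState s' c

/-- The trace (sequence of actions) of a computation. -/
def traceOf {S A : Type} (c : List (A × S)) : List A := c.map Prod.fst

/-- Stepwise compatibility of a computation with a decorated trace: the actions
match and after each step the (corresponding) reached state satisfies `P`
with respect to the decoration. -/
def decoComp {S A Z : Type} (P : S → Set A → Prop) (corr : Z → S) :
    List (A × Z) → List (A × Set A) → Prop
  | [], [] => True
  | (a, z) :: c, (b, X) :: φ => a = b ∧ P (corr z) X ∧ decoComp P corr c φ
  | _, _ => False

/-- A resolution of `s` obtained via a deterministic scheduler: a fully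
probabilistic NPLTS together with a correspondence function to the states of
the original NPLTS. -/
structure Resolution {S A : Type} (L : NPLTS S A) (s : S) where
  State : Type
  countable : Countable State
  lts : NPLTS State A
  corr : State → S
  init : State
  corr_init : corr init = s
  mimic : ∀ z a D, lts.trans z a D →
    ∃ D', L.trans (corr z) a D' ∧ ∀ z', D z' = D' (corr z')
  det : ∀ z a₁ a₂ D₁ D₂, lts.trans z a₁ D₁ → lts.trans z a₂ D₂ → a₁ = a₂ ∧ D₁ = D₂

namespace Resolution

variable {S A : Type} {L : NPLTS S A} {s : S}

/-- Probability of a set of computations of the resolution from its initial state. -/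
def prob (R : Resolution L s) (C : Set (List (A × R.State))) : ℝ≥0∞ :=
  R.lts.probSet R.init C

/-- `CC(z_s, α)`: the α-compatible computations from the initial state. -/
def cc (R : Resolution L s) (α : List A) : Set (List (A × R.State)) :=
  {c | R.lts.IsComp R.init c ∧ traceOf c = α}

/-- `CCC(z_s, α)`: the completed α-compatible computations (the corresponding
final state has no outgoing transitions in the original NPLTS). -/
def ccc (R : Resolution L s) (α : List A) : Set (List (A × R.State)) :=
  {c | c ∈ R.cc α ∧ ¬ L.hasTrans (R.corr (lastState R.init c))}

/-- `FCC(z_s, (α, F))`: α-compatible computations whose corresponding final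
state enables no action of the failure set `F`. -/
def fcc (R : Resolution L s) (α : List A) (F : Set A) : Set (List (A × R.State)) :=
  {c | c ∈ R.cc α ∧ ∀ f ∈ F, f ∉ L.enabled (R.corr (lastState R.init c))}

/-- `RCC(z_s, (α, Rd))`: α-compatible computations whose corresponding final
state enables exactly the ready set `Rd`. -/
def rcc (R : Resolution L s) (α : List A) (Rd : Set A) : Set (List (A × R.State)) :=
  {c | c ∈ R.cc α ∧ L.enabled (R.corr (lastState R.init c)) = Rd}

/-- `FTCC(z_s, φ)`: computations compatible with the failure trace `φ`. -/
def ftcc (R : Resolution L s) (φ : List (A × Set A)) : Set (List (A × R.State)) :=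
  {c | R.lts.IsComp R.init c ∧
    decoComp (fun t F => ∀ f ∈ F, f ∉ L.enabled t) R.corr c φ}

/-- `RTCC(z_s, ρ)`: computations compatible with the ready trace `ρ`. -/
def rtcc (R : Resolution L s) (ρ : List (A × Set A)) : Set (List (A × R.State)) :=
  {c | R.lts.IsComp R.init c ∧ decoComp (fun t X => L.enabled t = X) R.corr c ρ}

/-- `R ∈ Res_α(s)`: the resolution has no (maximal) computation corresponding
to a proper prefix of an α-compatible computation of the original NPLTS. -/
def InResAlpha (R : Resolution L s) (α : List A) : Prop :=
  ¬ ∃ c : List (A × R.State), R.lts.IsComp R.init c ∧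
      ¬ R.lts.hasTrans (lastState R.init c) ∧
      ∃ c' : List (A × S), L.IsComp s c' ∧ traceOf c' = α ∧
        (c.map fun p => (p.1, R.corr p.2)) <+: c' ∧ c.length < c'.length

/-- A state of the resolution reachable from its initial state. -/
def reachable (R : Resolution L s) (z : R.State) : Prop :=
  ∃ c, R.lts.IsComp R.init c ∧ lastState R.init c = z

/-- A maximal resolution: it cannot be further extended, i.e. every reachable
state whose corresponding state has an outgoing transition has one too. -/
def Maximal (R : Resolution L s) : Prop :=
  ∀ z, R.reachable z → L.hasTrans (R.corr z) → R.lts.hasTrans z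

/-- `SC(z_{s,o})`: successful computations of a resolution of a configuration
of an interaction system (the test component of the final configuration is
the success state `ω`). -/
def sc {S O : Type} {I : NPLTS (S × O) A} {cfg : S × O}
    (R : Resolution I cfg) (ω : O) : Set (List (A × R.State)) :=
  {c | R.lts.IsComp R.init c ∧ (R.corr (lastState R.init c)).2 = ω}

/-- `SCC(z_{s,o}, α)`: successful α-compatible computations. -/
def scc {S O : Type} {I : NPLTS (S × O) A} {cfg : S × O}
    (R : Resolution I cfg) (ω : O) (α : List A) : Set (List (A × R.State)) :=
  {c | (R.lts.IsComp R.init c ∧ (R.corr (lastState R.init c)).2 = ω) ∧ traceOf c = α}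

end Resolution

section Equivalences

variable {S A : Type} (L : NPLTS S A)

/-! ### Trace-based equivalences -/

/-- Probabilistic trace-distribution equivalence `≈_{PTr,dis}`. -/
def PTrDis (s₁ s₂ : S) : Prop :=
  (∀ R₁ : Resolution L s₁, ∃ R₂ : Resolution L s₂,
    ∀ α : List A, R₁.prob (R₁.cc α) = R₂.prob (R₂.cc α)) ∧
  (∀ R₂ : Resolution L s₂, ∃ R₁ : Resolution L s₁,
    ∀ α : List A, R₂.prob (R₂.cc α) = R₁.prob (R₁.cc α))

/-- Probabilistic trace equivalence `≈_{PTr}`. -/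
def PTr (s₁ s₂ : S) : Prop :=
  ∀ α : List A,
    (∀ R₁ : Resolution L s₁, ∃ R₂ : Resolution L s₂,
      R₁.prob (R₁.cc α) = R₂.prob (R₂.cc α)) ∧
    (∀ R₂ : Resolution L s₂, ∃ R₁ : Resolution L s₁,
      R₂.prob (R₂.cc α) = R₁.prob (R₁.cc α))

/-- The set of values `prob(CC(z_s, α))` over the resolutions in `Res_α(s)`. -/
def ccVals (s : S) (α : List A) : Set ℝ≥0∞ :=
  {p | ∃ R : Resolution L s, R.InResAlpha α ∧ p = R.prob (R.cc α)}

/-- Probabilistic ⊔⊓-trace equivalence `≈_{PTr,⊔⊓}`. -/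
def PTrSupInf (s₁ s₂ : S) : Prop :=
  ∀ α : List A,
    sSup (ccVals L s₁ α) = sSup (ccVals L s₂ α) ∧
    inf0 (ccVals L s₁ α) = inf0 (ccVals L s₂ α)

/-- Probabilistic completed-trace-distribution equivalence `≈_{PCTr,dis}`. -/
def PCTrDis (s₁ s₂ : S) : Prop :=
  (∀ R₁ : Resolution L s₁, ∃ R₂ R₂' : Resolution L s₂, ∀ α : List A,
    R₁.prob (R₁.cc α) = R₂.prob (R₂.cc α) ∧
    R₁.prob (R₁.ccc α) = R₂'.prob (R₂'.ccc α)) ∧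
  (∀ R₂ : Resolution L s₂, ∃ R₁ R₁' : Resolution L s₁, ∀ α : List A,
    R₂.prob (R₂.cc α) = R₁.prob (R₁.cc α) ∧
    R₂.prob (R₂.ccc α) = R₁'.prob (R₁'.ccc α))

/-- Probabilistic completed-trace equivalence `≈_{PCTr}`. -/
def PCTr (s₁ s₂ : S) : Prop :=
  ∀ α : List A,
    (∀ R₁ : Resolution L s₁, ∃ R₂ R₂' : Resolution L s₂,
      R₁.prob (R₁.cc α) = R₂.prob (R₂.cc α) ∧
      R₁.prob (R₁.ccc α) = R₂'.prob (R₂'.ccc α)) ∧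
    (∀ R₂ : Resolution L s₂, ∃ R₁ R₁' : Resolution L s₁,
      R₂.prob (R₂.cc α) = R₁.prob (R₁.cc α) ∧
      R₂.prob (R₂.ccc α) = R₁'.prob (R₁'.ccc α))

/-- The set of values `prob(CCC(z_s, α))` over the resolutions in `Res_α(s)`. -/
def cccVals (s : S) (α : List A) : Set ℝ≥0∞ :=
  {p | ∃ R : Resolution L s, R.InResAlpha α ∧ p = R.prob (R.ccc α)}

/-- Probabilistic ⊔⊓-completed-trace equivalence `≈_{PCTr,⊔⊓}`. -/
def PCTrSupInf (s₁ s₂ : S) : Prop :=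
  ∀ α : List A,
    (sSup (ccVals L s₁ α) = sSup (ccVals L s₂ α) ∧
     inf0 (ccVals L s₁ α) = inf0 (ccVals L s₂ α)) ∧
    (sSup (cccVals L s₁ α) = sSup (cccVals L s₂ α) ∧
     inf0 (cccVals L s₁ α) = inf0 (cccVals L s₂ α))

/-- Probabilistic failure-distribution equivalence `≈_{PF,dis}`. -/
def PFDis (s₁ s₂ : S) : Prop :=
  (∀ R₁ : Resolution L s₁, ∃ R₂ : Resolution L s₂, ∀ (α : List A) (F : Set A),
    R₁.prob (R₁.fcc α F) = R₂.prob (R₂.fcc α F)) ∧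
  (∀ R₂ : Resolution L s₂, ∃ R₁ : Resolution L s₁, ∀ (α : List A) (F : Set A),
    R₂.prob (R₂.fcc α F) = R₁.prob (R₁.fcc α F))

/-- Probabilistic failure equivalence `≈_{PF}`. -/
def PF (s₁ s₂ : S) : Prop :=
  ∀ (α : List A) (F : Set A),
    (∀ R₁ : Resolution L s₁, ∃ R₂ : Resolution L s₂,
      R₁.prob (R₁.fcc α F) = R₂.prob (R₂.fcc α F)) ∧
    (∀ R₂ : Resolution L s₂, ∃ R₁ : Resolution L s₁,
      R₂.prob (R₂.fcc α F) = R₁.prob (R₁.fcc α F))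

/-- The set of values `prob(FCC(z_s, (α, F)))` over the resolutions in `Res_α(s)`. -/
def fccVals (s : S) (α : List A) (F : Set A) : Set ℝ≥0∞ :=
  {p | ∃ R : Resolution L s, R.InResAlpha α ∧ p = R.prob (R.fcc α F)}

/-- Probabilistic ⊔⊓-failure equivalence `≈_{PF,⊔⊓}`. -/
def PFSupInf (s₁ s₂ : S) : Prop :=
  ∀ (α : List A) (F : Set A),
    sSup (fccVals L s₁ α F) = sSup (fccVals L s₂ α F) ∧
    inf0 (fccVals L s₁ α F) = inf0 (fccVals L s₂ α F)

/-- Probabilistic failure-trace-distribution equivalence `≈_{PFTr,dis}`. -/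
def PFTrDis (s₁ s₂ : S) : Prop :=
  (∀ R₁ : Resolution L s₁, ∃ R₂ : Resolution L s₂, ∀ φ : List (A × Set A),
    R₁.prob (R₁.ftcc φ) = R₂.prob (R₂.ftcc φ)) ∧
  (∀ R₂ : Resolution L s₂, ∃ R₁ : Resolution L s₁, ∀ φ : List (A × Set A),
    R₂.prob (R₂.ftcc φ) = R₁.prob (R₁.ftcc φ))

/-- Probabilistic failure-trace equivalence `≈_{PFTr}`. -/
def PFTr (s₁ s₂ : S) : Prop :=
  ∀ φ : List (A × Set A),
    (∀ R₁ : Resolution L s₁, ∃ R₂ : Resolution L s₂,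
      R₁.prob (R₁.ftcc φ) = R₂.prob (R₂.ftcc φ)) ∧
    (∀ R₂ : Resolution L s₂, ∃ R₁ : Resolution L s₁,
      R₂.prob (R₂.ftcc φ) = R₁.prob (R₁.ftcc φ))

/-- The set of values `prob(FTCC(z_s, φ))` over the resolutions in
`Res_{a₁…aₙ}(s)`, where `a₁…aₙ` is the trace underlying `φ`. -/
def ftccVals (s : S) (φ : List (A × Set A)) : Set ℝ≥0∞ :=
  {p | ∃ R : Resolution L s, R.InResAlpha (φ.map Prod.fst) ∧ p = R.prob (R.ftcc φ)}

/-- Probabilistic ⊔⊓-failure-trace equivalence `≈_{PFTr,⊔⊓}`. -/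
def PFTrSupInf (s₁ s₂ : S) : Prop :=
  ∀ φ : List (A × Set A),
    sSup (ftccVals L s₁ φ) = sSup (ftccVals L s₂ φ) ∧
    inf0 (ftccVals L s₁ φ) = inf0 (ftccVals L s₂ φ)

/-- Probabilistic readiness-distribution equivalence `≈_{PR,dis}`. -/
def PRDis (s₁ s₂ : S) : Prop :=
  (∀ R₁ : Resolution L s₁, ∃ R₂ : Resolution L s₂, ∀ (α : List A) (Rd : Set A),
    R₁.prob (R₁.rcc α Rd) = R₂.prob (R₂.rcc α Rd)) ∧
  (∀ R₂ : Resolution L s₂, ∃ R₁ : Resolution L s₁, ∀ (α : List A) (Rd : Set A),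
    R₂.prob (R₂.rcc α Rd) = R₁.prob (R₁.rcc α Rd))

/-- Probabilistic readiness equivalence `≈_{PR}`. -/
def PR (s₁ s₂ : S) : Prop :=
  ∀ (α : List A) (Rd : Set A),
    (∀ R₁ : Resolution L s₁, ∃ R₂ : Resolution L s₂,
      R₁.prob (R₁.rcc α Rd) = R₂.prob (R₂.rcc α Rd)) ∧
    (∀ R₂ : Resolution L s₂, ∃ R₁ : Resolution L s₁,
      R₂.prob (R₂.rcc α Rd) = R₁.prob (R₁.rcc α Rd))

/-- The set of values `prob(RCC(z_s, (α, Rd)))` over the resolutions in `Res_α(s)`. -/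
def rccVals (s : S) (α : List A) (Rd : Set A) : Set ℝ≥0∞ :=
  {p | ∃ R : Resolution L s, R.InResAlpha α ∧ p = R.prob (R.rcc α Rd)}

/-- Probabilistic ⊔⊓-readiness equivalence `≈_{PR,⊔⊓}`. -/
def PRSupInf (s₁ s₂ : S) : Prop :=
  ∀ (α : List A) (Rd : Set A),
    sSup (rccVals L s₁ α Rd) = sSup (rccVals L s₂ α Rd) ∧
    inf0 (rccVals L s₁ α Rd) = inf0 (rccVals L s₂ α Rd)

/-- Probabilistic ready-trace-distribution equivalence `≈_{PRTr,dis}`. -/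
def PRTrDis (s₁ s₂ : S) : Prop :=
  (∀ R₁ : Resolution L s₁, ∃ R₂ : Resolution L s₂, ∀ ρ : List (A × Set A),
    R₁.prob (R₁.rtcc ρ) = R₂.prob (R₂.rtcc ρ)) ∧
  (∀ R₂ : Resolution L s₂, ∃ R₁ : Resolution L s₁, ∀ ρ : List (A × Set A),
    R₂.prob (R₂.rtcc ρ) = R₁.prob (R₁.rtcc ρ))

/-- Probabilistic ready-trace equivalence `≈_{PRTr}`. -/
def PRTr (s₁ s₂ : S) : Prop :=
  ∀ ρ : List (A × Set A),
    (∀ R₁ : Resolution L s₁, ∃ R₂ : Resolution L s₂,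
      R₁.prob (R₁.rtcc ρ) = R₂.prob (R₂.rtcc ρ)) ∧
    (∀ R₂ : Resolution L s₂, ∃ R₁ : Resolution L s₁,
      R₂.prob (R₂.rtcc ρ) = R₁.prob (R₁.rtcc ρ))

/-- The set of values `prob(RTCC(z_s, ρ))` over the resolutions in
`Res_{a₁…aₙ}(s)`, where `a₁…aₙ` is the trace underlying `ρ`. -/
def rtccVals (s : S) (ρ : List (A × Set A)) : Set ℝ≥0∞ :=
  {p | ∃ R : Resolution L s, R.InResAlpha (ρ.map Prod.fst) ∧ p = R.prob (R.rtcc ρ)}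

/-- Probabilistic ⊔⊓-ready-trace equivalence `≈_{PRTr,⊔⊓}`. -/
def PRTrSupInf (s₁ s₂ : S) : Prop :=
  ∀ ρ : List (A × Set A),
    sSup (rtccVals L s₁ ρ) = sSup (rtccVals L s₂ ρ) ∧
    inf0 (rtccVals L s₁ ρ) = inf0 (rtccVals L s₂ ρ)

end Equivalences

/-! ### Tests and testing equivalences -/

/-- A nondeterministic and probabilistic test (NPT): a finite NPLTS (finitely
many states, finitely many outgoing transitions per state, acyclic) with a
distinguished success state `succ` having no outgoing transitions. -/
structure NPT (A : Type) where
  O : Type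
  lts : NPLTS O A
  succ : O
  fin : Finite O
  finTrans : ∀ o : O, {p : A × PMF O | lts.trans o p.1 p.2}.Finite
  acyclic : ∀ (o : O) (c : List (A × O)), lts.IsComp o c → c ≠ [] → lastState o c ≠ o
  succ_stop : ∀ a D, ¬ lts.trans succ a D

section Testing

variable {S A : Type} (L : NPLTS S A)

/-- The set of success probabilities over the maximal resolutions of the
configuration `(s, o)` of the interaction system of `L` and `T`. -/
def scVals (T : NPT A) (s : S) (o : T.O) : Set ℝ≥0∞ :=
  {p | ∃ R : Resolution (L.par T.lts) (s, o), R.Maximal ∧ p = R.prob (R.sc T.succ)}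

/-- Probabilistic ⊔⊓-testing equivalence `≈_{PTe-⊔⊓}`. -/
def PTeSupInf (s₁ s₂ : S) : Prop :=
  ∀ (T : NPT A) (o : T.O),
    sSup (scVals L T s₁ o) = sSup (scVals L T s₂ o) ∧
    inf0 (scVals L T s₁ o) = inf0 (scVals L T s₂ o)

/-- Probabilistic ∀∃-testing equivalence `≈_{PTe-∀∃}`. -/
def PTeAE (s₁ s₂ : S) : Prop :=
  ∀ (T : NPT A) (o : T.O),
    (∀ R₁ : Resolution (L.par T.lts) (s₁, o), R₁.Maximal →
      ∃ R₂ : Resolution (L.par T.lts) (s₂, o), R₂.Maximal ∧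
        R₁.prob (R₁.sc T.succ) = R₂.prob (R₂.sc T.succ)) ∧
    (∀ R₂ : Resolution (L.par T.lts) (s₂, o), R₂.Maximal →
      ∃ R₁ : Resolution (L.par T.lts) (s₁, o), R₁.Maximal ∧
        R₂.prob (R₂.sc T.succ) = R₁.prob (R₁.sc T.succ))

/-- Probabilistic trace-by-trace-distribution testing equivalence `≈_{PTe-tbt,dis}`. -/
def PTeTbtDis (s₁ s₂ : S) : Prop :=
  ∀ (T : NPT A) (o : T.O),
    (∀ R₁ : Resolution (L.par T.lts) (s₁, o), R₁.Maximal →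
      ∃ R₂ : Resolution (L.par T.lts) (s₂, o), R₂.Maximal ∧ ∀ α : List A,
        ((R₁.ccc α).Nonempty → (R₂.ccc α).Nonempty) ∧
        R₁.prob (R₁.scc T.succ α) = R₂.prob (R₂.scc T.succ α)) ∧
    (∀ R₂ : Resolution (L.par T.lts) (s₂, o), R₂.Maximal →
      ∃ R₁ : Resolution (L.par T.lts) (s₁, o), R₁.Maximal ∧ ∀ α : List A,
        ((R₂.ccc α).Nonempty → (R₁.ccc α).Nonempty) ∧
        R₂.prob (R₂.scc T.succ α) = R₁.prob (R₁.scc T.succ α))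

/-- Probabilistic trace-by-trace testing equivalence `≈_{PTe-tbt}`. -/
def PTeTbt (s₁ s₂ : S) : Prop :=
  ∀ (T : NPT A) (o : T.O) (α : List A),
    (∀ R₁ : Resolution (L.par T.lts) (s₁, o), R₁.Maximal → (R₁.ccc α).Nonempty →
      ∃ R₂ : Resolution (L.par T.lts) (s₂, o), R₂.Maximal ∧ (R₂.ccc α).Nonempty ∧
        R₁.prob (R₁.scc T.succ α) = R₂.prob (R₂.scc T.succ α)) ∧
    (∀ R₂ : Resolution (L.par T.lts) (s₂, o), R₂.Maximal → (R₂.ccc α).Nonempty →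
      ∃ R₁ : Resolution (L.par T.lts) (s₁, o), R₁.Maximal ∧ (R₁.ccc α).Nonempty ∧
        R₂.prob (R₂.scc T.succ α) = R₁.prob (R₁.scc T.succ α))

/-- The set of values `prob(SCC(z_{s,o}, α))` over `Res_{max,C,α}(s, o)`. -/
def sccVals (T : NPT A) (s : S) (o : T.O) (α : List A) : Set ℝ≥0∞ :=
  {p | ∃ R : Resolution (L.par T.lts) (s, o), R.Maximal ∧ (R.ccc α).Nonempty ∧
    p = R.prob (R.scc T.succ α)}

/-- Probabilistic ⊔⊓-trace-by-trace testing equivalence `≈_{PTe-tbt,⊔⊓}`. -/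
def PTeTbtSupInf (s₁ s₂ : S) : Prop :=
  ∀ (T : NPT A) (o : T.O) (α : List A),
    ((∃ R : Resolution (L.par T.lts) (s₁, o), R.Maximal ∧ (R.ccc α).Nonempty) ↔
     (∃ R : Resolution (L.par T.lts) (s₂, o), R.Maximal ∧ (R.ccc α).Nonempty)) ∧
    sSup (sccVals L T s₁ o α) = sSup (sccVals L T s₂ o α) ∧
    inf0 (sccVals L T s₁ o α) = inf0 (sccVals L T s₂ o α)

end Testing

/-! ### Bisimulation equivalences -/

section Bisimulations

variable {S A : Type} (L : NPLTS S A)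

/-- `G` is a union of equivalence classes of `B` (a "group of classes"). -/
def BClosed (B : S → S → Prop) (G : Set S) : Prop :=
  ∀ x y, B x y → x ∈ G → y ∈ G

/-- A probabilistic group-distribution bisimulation. -/
def IsPBDis (B : S → S → Prop) : Prop :=
  Equivalence B ∧ ∀ s₁ s₂, B s₁ s₂ → ∀ a D₁, L.trans s₁ a D₁ →
    ∃ D₂, L.trans s₂ a D₂ ∧ ∀ G : Set S, BClosed B G → pmfMass D₁ G = pmfMass D₂ G

/-- Probabilistic group-distribution bisimilarity `≈_{PB,dis}`. -/
def PBDis (s₁ s₂ : S) : Prop := ∃ B, IsPBDis L B ∧ B s₁ s₂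

/-- A probabilistic bisimulation (class groups considered one at a time). -/
def IsPB (B : S → S → Prop) : Prop :=
  Equivalence B ∧ ∀ s₁ s₂, B s₁ s₂ → ∀ G : Set S, BClosed B G →
    ∀ a D₁, L.trans s₁ a D₁ →
      ∃ D₂, L.trans s₂ a D₂ ∧ pmfMass D₁ G = pmfMass D₂ G

/-- Probabilistic bisimilarity `≈_{PB}`. -/
def PB (s₁ s₂ : S) : Prop := ∃ B, IsPB L B ∧ B s₁ s₂

/-- The set of values `D(∪G)` over the `a`-transitions of `s`. -/
def massVals (s : S) (a : A) (G : Set S) : Set ℝ≥0∞ :=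
  {p | ∃ D, L.trans s a D ∧ p = pmfMass D G}

/-- A probabilistic ⊔⊓-bisimulation. -/
def IsPBSupInf (B : S → S → Prop) : Prop :=
  Equivalence B ∧ ∀ s₁ s₂, B s₁ s₂ → ∀ G : Set S, BClosed B G → ∀ a : A,
    ((∃ D, L.trans s₁ a D) ↔ (∃ D, L.trans s₂ a D)) ∧
    sSup (massVals L s₁ a G) = sSup (massVals L s₂ a G) ∧
    inf0 (massVals L s₁ a G) = inf0 (massVals L s₂ a G)

/-- Probabilistic ⊔⊓-bisimilarity `≈_{PB,⊔⊓}`. -/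
def PBSupInf (s₁ s₂ : S) : Prop := ∃ B, IsPBSupInf L B ∧ B s₁ s₂

/-- Classical bisimilarity of the underlying LTS of a fully nondeterministic
NPLTS, where `s →a s'` means `s →a D` with `D(s') = 1`. -/
def BFnd (s₁ s₂ : S) : Prop :=
  ∃ B : S → S → Prop, Equivalence B ∧
    (∀ t₁ t₂, B t₁ t₂ → ∀ a t₁', (∃ D, L.trans t₁ a D ∧ D t₁' = 1) →
      ∃ t₂', (∃ D, L.trans t₂ a D ∧ D t₂' = 1) ∧ B t₁' t₂') ∧
    B s₁ s₂

end Bisimulations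

end

/-!
Undecorated traces are failure traces all of whose failure sets are empty, and a failure pair
`(α, F)` with `α ≠ []` is the failure trace whose only nonempty failure set is `F`, in last
position. A failure pair `([], F)` corresponds to no failure trace: its probability is `1` or `0`
according to whether `F` is disjoint from the actions enabled at the initial state, and those
actions are the `a` for which the trace `[a]` has nonzero supremal probability. A failure pair
`(α, ∅)` is the trace `α`, and `(α, univ)` is the completed trace `α`.
-/

namespace NPLTS

variable {S A : Type} {L : NPLTS S A} {s : S}

theorem compProb_ne_zero_iff {c : List (A × S)} : L.compProb s c ≠ 0 ↔ L.IsComp s c := by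
  induction c generalizing s with
  | nil => simp [compProb, IsComp]
  | cons p c ih =>
    rw [compProb, IsComp, mul_ne_zero_iff, ih]
    simp [PMF.mem_support_iff]

theorem probSet_ne_zero_iff {C : Set (List (A × S))} :
    L.probSet s C ≠ 0 ↔ ∃ c ∈ C, L.IsComp s c := by
  simp [probSet, ← compProb_ne_zero_iff]

end NPLTS

namespace Resolution

variable {S A : Type} {L : NPLTS S A} {s : S}

theorem enabled_subset (R : Resolution L s) (z : R.State) :
    R.lts.enabled z ⊆ L.enabled (R.corr z) := by
  rintro a ⟨D, hD⟩
  obtain ⟨D', hD', -⟩ := R.mimic z a D hD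
  exact ⟨D', hD'⟩

theorem inResAlpha_nil (R : Resolution L s) : R.InResAlpha [] := by
  rintro ⟨c, -, -, c', -, htrace, -, hlt⟩
  obtain rfl : c' = [] := List.map_eq_nil_iff.mp htrace
  exact Nat.not_lt_zero _ hlt

theorem inResAlpha_singleton {R : Resolution L s} (h : R.lts.hasTrans R.init) (a : A) :
    R.InResAlpha [a] := by
  rintro ⟨c, -, hstuck, c', -, htrace, -, hlt⟩
  have hlen : c'.length = 1 := by simpa [traceOf] using congrArg List.length htrace
  obtain rfl : c = [] := List.length_eq_zero_iff.mp (by lia)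
  exact hstuck h

theorem cc_nil (R : Resolution L s) : R.cc [] = {[]} := by
  ext c
  refine ⟨fun h => List.map_eq_nil_iff.mp h.2, ?_⟩
  rintro rfl
  exact ⟨trivial, rfl⟩

theorem cc_singleton_nonempty_iff {R : Resolution L s} {a : A} :
    (R.cc [a]).Nonempty ↔ a ∈ R.lts.enabled R.init := by
  constructor
  · rintro ⟨c, hcomp, htrace⟩
    obtain ⟨⟨b, z⟩, rfl, rfl⟩ := List.map_eq_singleton_iff.mp htrace
    obtain ⟨⟨D, hD, -⟩, -⟩ := hcomp
    exact ⟨D, hD⟩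
  · rintro ⟨D, hD⟩
    obtain ⟨z, hz⟩ := D.support_nonempty
    exact ⟨[(a, z)], ⟨⟨D, hD, hz⟩, trivial⟩, rfl⟩

theorem prob_cc_ne_zero_iff {R : Resolution L s} {α : List A} :
    R.prob (R.cc α) ≠ 0 ↔ (R.cc α).Nonempty :=
  NPLTS.probSet_ne_zero_iff.trans <| exists_congr fun _ => and_iff_left_of_imp And.left

theorem prob_fcc_nil (R : Resolution L s) (F : Set A) :
    R.prob (R.fcc [] F) = if Disjoint F (L.enabled s) then 1 else 0 := by
  have hfcc : R.fcc [] F = if Disjoint F (L.enabled s) then {[]} else ∅ := by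
    ext c
    split_ifs with hF <;> rw [Set.disjoint_left] at hF <;>
      simp +contextual [fcc, cc_nil, lastState, R.corr_init, hF]
  rw [hfcc]
  split_ifs <;> simp [prob, NPLTS.probSet, NPLTS.compProb]

/-- The resolution of `s` whose scheduler stops immediately. -/
def halt (L : NPLTS S A) (s : S) : Resolution L s where
  State := Unit
  countable := inferInstance
  lts := ⟨fun _ _ _ => False⟩
  corr _ := s
  init := ()
  corr_init := rfl
  mimic _ _ _ h := h.elim
  det _ _ _ _ _ h := h.elim

/-- The resolution of `s` whose scheduler performs the transition from `s` to `D` and then stops.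
Its states are only `s` and the support of `D`, which makes it countable whatever `S` is. -/
noncomputable def step {a : A} {D : PMF S} (h : L.trans s a D) : Resolution L s where
  State := ↥(insert s D.support)
  countable := (D.support_countable.insert s).to_subtype
  lts := ⟨fun z b E => z = s ∧ b = a ∧ ∀ z', E z' = D z'⟩
  corr := Subtype.val
  init := ⟨s, Set.mem_insert s _⟩
  corr_init := rfl
  mimic := by
    rintro z b E ⟨hz, rfl, hE⟩
    exact ⟨D, by rwa [hz], hE⟩
  det := by
    rintro z b₁ b₂ E₁ E₂ ⟨-, rfl, hE₁⟩ ⟨-, rfl, hE₂⟩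
    exact ⟨rfl, PMF.ext fun z' => (hE₁ z').trans (hE₂ z').symm⟩

theorem mem_enabled_init_step {a : A} {D : PMF S} (h : L.trans s a D) :
    a ∈ (step h).lts.enabled (step h).init := by
  have hsum : HasSum (fun z : ↥(insert s D.support) => D z) 1 :=
    (hasSum_subtype_iff_of_support_subset (Set.subset_insert s D.support)).mpr D.2
  exact ⟨⟨_, hsum⟩, rfl, rfl, fun _ => rfl⟩

end Resolution

section DecoratedTraces

variable {S A Z : Type} {P : S → Set A → Prop} {corr : Z → S} {φ : List (A × Set A)}
  {c : List (A × Z)}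

theorem decoComp_iff_traceOf_eq (hφ : ∀ p ∈ φ, ∀ t, P t p.2) :
    decoComp P corr c φ ↔ traceOf c = φ.map Prod.fst := by
  induction φ generalizing c with
  | nil => cases c <;> simp [decoComp, traceOf]
  | cons p φ ih =>
    obtain ⟨hp, hφ⟩ := List.forall_mem_cons.mp hφ
    cases c with
    | nil => simp [decoComp, traceOf]
    | cons q c =>
      simp only [decoComp, ih hφ, hp (corr q.2), true_and, traceOf, List.map_cons, List.cons.injEq]

theorem decoComp_append_singleton_iff (hφ : ∀ p ∈ φ, ∀ t, P t p.2) (a : A) (X : Set A) (z : Z) :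
    decoComp P corr c (φ ++ [(a, X)]) ↔
      traceOf c = φ.map Prod.fst ++ [a] ∧ P (corr (lastState z c)) X := by
  induction φ generalizing c z with
  | nil =>
    rcases c with _ | ⟨⟨b, y⟩, _ | ⟨q, c⟩⟩ <;> simp [decoComp, traceOf, lastState]
  | cons p φ ih =>
    obtain ⟨hp, hφ⟩ := List.forall_mem_cons.mp hφ
    cases c with
    | nil => simp [decoComp, traceOf]
    | cons q c =>
      simp only [List.cons_append, decoComp, ih hφ q.2, hp (corr q.2), true_and, traceOf,
        lastState, List.map_cons, List.cons.injEq, and_assoc]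

end DecoratedTraces

section ExtremalProbabilities

variable {S A : Type} {L : NPLTS S A} {s s₁ s₂ : S}

theorem ftccVals_map_empty (L : NPLTS S A) (s : S) (α : List A) :
    ftccVals L s (α.map (·, ∅)) = ccVals L s α := by
  simp [ftccVals, ccVals, Resolution.ftcc, Resolution.cc, decoComp_iff_traceOf_eq,
    Function.comp_def]

theorem ftccVals_map_empty_append (L : NPLTS S A) (s : S) (α : List A) (a : A) (F : Set A) :
    ftccVals L s (α.map (·, ∅) ++ [(a, F)]) = fccVals L s (α ++ [a]) F := by
  have hftcc (R : Resolution L s) :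
      R.ftcc (α.map (·, ∅) ++ [(a, F)]) = R.fcc (α ++ [a]) F := by
    ext c
    simp [Resolution.ftcc, Resolution.fcc, Resolution.cc,
      decoComp_append_singleton_iff (z := R.init), Function.comp_def, and_assoc]
  simp [ftccVals, fccVals, hftcc, Function.comp_def]

theorem fccVals_empty (L : NPLTS S A) (s : S) (α : List A) :
    fccVals L s α ∅ = ccVals L s α := by
  simp [fccVals, ccVals, Resolution.fcc]

theorem fccVals_univ (L : NPLTS S A) (s : S) (α : List A) :
    fccVals L s α Set.univ = cccVals L s α := by
  simp [fccVals, cccVals, Resolution.fcc, Resolution.ccc, NPLTS.enabled, NPLTS.hasTrans]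

theorem fccVals_nil (L : NPLTS S A) (s : S) (F : Set A) :
    fccVals L s [] F = {if Disjoint F (L.enabled s) then 1 else 0} := by
  ext p
  simp only [fccVals, Resolution.prob_fcc_nil, Resolution.inResAlpha_nil, true_and,
    Set.mem_ofPred_eq, Set.mem_singleton_iff]
  exact ⟨fun ⟨_, hp⟩ => hp, fun hp => ⟨Resolution.halt L s, hp⟩⟩

theorem sSup_ccVals_ne_zero_iff {α : List A} :
    sSup (ccVals L s α) ≠ 0 ↔ ∃ R : Resolution L s, R.InResAlpha α ∧ (R.cc α).Nonempty := by
  rw [← bot_eq_zero, Ne, sSup_eq_bot]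
  simp [ccVals, ← Resolution.prob_cc_ne_zero_iff]

theorem sSup_ccVals_singleton_ne_zero_iff {a : A} :
    sSup (ccVals L s [a]) ≠ 0 ↔ a ∈ L.enabled s := by
  rw [sSup_ccVals_ne_zero_iff]
  constructor
  · rintro ⟨R, -, hR⟩
    rw [← R.corr_init]
    exact R.enabled_subset R.init (Resolution.cc_singleton_nonempty_iff.mp hR)
  · rintro ⟨D, hD⟩
    have ha := Resolution.mem_enabled_init_step hD
    exact ⟨Resolution.step hD, Resolution.inResAlpha_singleton ⟨a, ha⟩ a,
      Resolution.cc_singleton_nonempty_iff.mpr ha⟩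

theorem PTrSupInf.enabled_eq (h : PTrSupInf L s₁ s₂) : L.enabled s₁ = L.enabled s₂ := by
  ext a
  rw [← sSup_ccVals_singleton_ne_zero_iff, ← sSup_ccVals_singleton_ne_zero_iff, (h [a]).1]

theorem PFTrSupInf.ptrSupInf (h : PFTrSupInf L s₁ s₂) : PTrSupInf L s₁ s₂ := fun α => by
  simpa only [ftccVals_map_empty] using h (α.map (·, ∅))

theorem PFTrSupInf.pfSupInf (h : PFTrSupInf L s₁ s₂) : PFSupInf L s₁ s₂ := fun α F => by
  obtain rfl | ⟨β, a, rfl⟩ := α.eq_nil_or_concat'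
  · rw [fccVals_nil, fccVals_nil, h.ptrSupInf.enabled_eq]
    exact ⟨rfl, rfl⟩
  · have hβ := h (β.map (·, ∅) ++ [(a, F)])
    rwa [ftccVals_map_empty_append, ftccVals_map_empty_append] at hβ

theorem PFSupInf.pctrSupInf (h : PFSupInf L s₁ s₂) : PCTrSupInf L s₁ s₂ := fun α => by
  constructor
  · simpa only [fccVals_empty] using h α ∅
  · simpa only [fccVals_univ] using h α Set.univ

theorem PCTrSupInf.ptrSupInf (h : PCTrSupInf L s₁ s₂) : PTrSupInf L s₁ s₂ :=
  fun α => (h α).1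

end ExtremalProbabilities

theorem supinf_chain_general {S A : Type} (L : NPLTS S A) (s₁ s₂ : S) :
    (PFTrSupInf L s₁ s₂ → PFSupInf L s₁ s₂) ∧
    (PFSupInf L s₁ s₂ → PCTrSupInf L s₁ s₂) ∧
    (PCTrSupInf L s₁ s₂ → PTrSupInf L s₁ s₂) :=
  ⟨PFTrSupInf.pfSupInf, PFSupInf.pctrSupInf, PCTrSupInf.ptrSupInf⟩

/-- `≈_{PFTr,⊔⊓} ⊆ ≈_{PF,⊔⊓} ⊆ ≈_{PCTr,⊔⊓} ⊆ ≈_{PTr,⊔⊓}`. -/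
theorem supinf_chain
    {S A : Type} [Countable S] [Countable A] (L : NPLTS S A) (s₁ s₂ : S) :
    (PFTrSupInf L s₁ s₂ → PFSupInf L s₁ s₂) ∧
    (PFSupInf L s₁ s₂ → PCTrSupInf L s₁ s₂) ∧
    (PCTrSupInf L s₁ s₂ → PTrSupInf L s₁ s₂) :=
  supinf_chain_general L s₁ s₂
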